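/- Let < be a strict total order on A. For each three-valued mem-basic form P over A there is a unique CLU-basic form Q such that CP_cl^U ⊢ P = Q. -/

import Mathlib

/-!
The axioms are sound for the three-valued semantics `eval`, in which an atom takes the value true,
false or undefined and `P ◁ Q ▷ R` is undefined whenever `Q` is. The proof rests on a semantic
reading of the shared alphabet: if a mem-basic form `P` is defined under some valuation, then
`a ∈ sha P` holds exactly when making `a` undefined makes `P` undefined (`mem_sha_iff_eval`). Hence
equivalent mem-basic forms that are not equivalent to `U` have the same shared alphabet.

*Uniqueness.* A CLU-basic form other than `U` is somewhere defined (`IsCUbf.eq_U`). Two equivalent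
CLU-basic forms are therefore both `U`, or have the same shared alphabet `σ`. If `σ` is empty they
are constants. Otherwise they are `F_σ(P_0, …)` and `F_σ(Q_0, …)`, the atoms of `σ` do not occur in
the `P_i` and `Q_i`, so `P_i` and `Q_i` are equivalent, and induction applies
(`IsCUbf.unique`).

*Existence.* If every path of `P` to a leaf `T` or `F` passes through `a`, then (CL2) and the
derivable equation `U ◁ a ▷ U = U` give `P = ℓ_a(P) ◁ a ▷ r_a(P)` (`der_split`). Iterating over the
shared alphabet `σ` yields `P = F_σ(P_0, …)` with no atom of `σ` in any `P_i`, and by induction on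
the number of atoms each `P_i` equals a CLU-basic form `Q_i`. If all `Q_i` are `U`, then `P = U` is
derivable; otherwise `F_σ(Q_0, …)` is somewhere defined and equivalent to `P`, so its shared
alphabet is again `σ`, which makes it a CLU-basic form (`exists_IsCUbf`).
-/

/-- Three-valued conditional expressions over a set `A` of atoms: constants T, F, U,
atoms, and the ternary conditional `cond P Q R` read `P ◁ Q ▷ R` ("if Q then P else R"). -/
inductive ExprU (A : Type) : Type
  | T : ExprU A
  | F : ExprU A
  | U : ExprU A
  | atom : A → ExprU A
  | cond : ExprU A → ExprU A → ExprU A → ExprU A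

namespace ExprU

/-- Derivability from the axiom system CP_cl^U = CP + (CPmem) + (CL2) + (CP-U). -/
inductive DerClU {A : Type} : ExprU A → ExprU A → Prop
  | refl (P : ExprU A) : DerClU P P
  | symm {P Q : ExprU A} : DerClU P Q → DerClU Q P
  | trans {P Q R : ExprU A} : DerClU P Q → DerClU Q R → DerClU P R
  | congr {P P' Q Q' R R' : ExprU A} :
      DerClU P P' → DerClU Q Q' → DerClU R R' →
      DerClU (cond P Q R) (cond P' Q' R')
  | cp1 (x y : ExprU A) : DerClU (cond x T y) x
  | cp2 (x y : ExprU A) : DerClU (cond x F y) y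
  | cp3 (x : ExprU A) : DerClU (cond T x F) x
  | cp4 (x y z u v : ExprU A) :
      DerClU (cond x (cond y z u) v) (cond (cond x y v) z (cond x u v))
  | cpmem (x y z u v w : ExprU A) :
      DerClU (cond x y (cond z u (cond v y w))) (cond x y (cond z u w))
  | cl2 (x y z u v w : ExprU A) :
      DerClU (cond (cond x y z) u (cond v y w)) (cond (cond x u v) y (cond z u w))
  | cpu (x y : ExprU A) : DerClU (cond x U y) U

/-- The set α(P) of atoms occurring in a conditional expression. -/
def atoms {A : Type} [DecidableEq A] : ExprU A → Finset A
  | T => ∅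
  | F => ∅
  | U => ∅
  | atom a => {a}
  | cond P Q R => atoms P ∪ atoms Q ∪ atoms R

/-- Three-valued mem-basic forms. -/
inductive IsMBF {A : Type} [DecidableEq A] : ExprU A → Prop
  | T : IsMBF T
  | F : IsMBF F
  | U : IsMBF U
  | cond {P Q : ExprU A} (a : A) : IsMBF P → IsMBF Q →
      a ∉ atoms P → a ∉ atoms Q → IsMBF (cond P (atom a) Q)

/-- The auxiliary function f for the three-valued shared alphabet:
f(U, x) = x, f(T, x) = f(F, x) = ∅,
f(P₁ ◁ a ▷ P₂, x) = {a} ∪ (f(P₁, x \ {a}) ∩ f(P₂, x \ {a})). -/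
def shaAux {A : Type} [DecidableEq A] : ExprU A → Finset A → Finset A
  | cond P (atom a) Q, x => insert a (shaAux P (x.erase a) ∩ shaAux Q (x.erase a))
  | U, x => x
  | _, _ => ∅

/-- The shared alphabet α̃(P) = f(P, α(P)) of a three-valued mem-basic form. -/
def sha {A : Type} [DecidableEq A] (P : ExprU A) : Finset A :=
  shaAux P (atoms P)

/-- Left a-reduction ℓ_a on basic forms. -/
def lred {A : Type} [DecidableEq A] (a : A) : ExprU A → ExprU A
  | cond P (atom b) Q => if b = a then P else cond (lred a P) (atom b) (lred a Q)
  | e => e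

/-- Right a-reduction r_a on basic forms. -/
def rred {A : Type} [DecidableEq A] (a : A) : ExprU A → ExprU A
  | cond P (atom b) Q => if b = a then Q else cond (rred a P) (atom b) (rred a Q)
  | e => e

/-- `Fseq σ P` is the basic form F_σ(P_0, …, P_{2^{|σ|}−1}):
F_ε(P_0) = P_0 and F_{aρ}(P_0,…) = F_ρ(P_0,…,P_{2^{|ρ|}−1}) ◁ a ▷ F_ρ(P_{2^{|ρ|}},…). -/
def Fseq {A : Type} : (σ : List A) → (Fin (2 ^ σ.length) → ExprU A) → ExprU A
  | [], P => P ⟨0, by positivity⟩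
  | a :: ρ, P =>
      cond (Fseq ρ (fun i => P ⟨i.1, by have := i.2; simp [Nat.pow_succ]; omega⟩))
        (atom a)
        (Fseq ρ (fun i => P ⟨2 ^ ρ.length + i.1, by have := i.2; simp [Nat.pow_succ]; omega⟩))

end ExprU

namespace ExprU
/-- CLU-basic forms (relative to the ordering of A): T, F and U are CLU-basic forms,
and a three-valued mem-basic form P is a CLU-basic form if, for σ the enumeration of
α̃(P) in increasing order, P = F_σ(P_0, …, P_{2^{|σ|}−1}) where some P_j ≠ U and each
P_i is a CLU-basic form. -/
inductive IsCUbf {A : Type} [LinearOrder A] : ExprU A → Prop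
  | T : IsCUbf T
  | F : IsCUbf F
  | U : IsCUbf U
  | node {P : ExprU A} (hm : IsMBF P)
      (Ps : Fin (2 ^ ((sha P).sort (· ≤ ·)).length) → ExprU A)
      (hP : P = Fseq ((sha P).sort (· ≤ ·)) Ps)
      (hne : ∃ j, Ps j ≠ ExprU.U)
      (hC : ∀ i, IsCUbf (Ps i)) : IsCUbf P
end ExprU

namespace ExprU

/-! ### Three-valued semantics -/

/-- The value of an expression under a valuation of the atoms; `none` is the value undefined. -/
def eval {A : Type} (v : A → Option Bool) : ExprU A → Option Bool
  | T => some true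
  | F => some false
  | U => none
  | atom a => v a
  | cond P Q R =>
    match eval v Q with
    | some true => eval v P
    | some false => eval v R
    | none => none

/-- Semantic equivalence with `U`. -/
def Undef {A : Type} (P : ExprU A) : Prop := ∀ v, eval v P = none

theorem DerClU.sound {A : Type} {P Q : ExprU A} (h : DerClU P Q) (v : A → Option Bool) :
    eval v P = eval v Q := by
  induction h with
  | refl => rfl
  | symm _ ih => exact ih.symm
  | trans _ _ ih₁ ih₂ => exact ih₁.trans ih₂
  | congr _ _ _ ih₁ ih₂ ih₃ => simp only [eval, ih₁, ih₂, ih₃]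
  | cp1 => rfl
  | cp2 => rfl
  | cp3 x => simp only [eval]; rcases eval v x with _ | _ | _ <;> rfl
  | cp4 x y z u w => simp only [eval]; rcases eval v z with _ | _ | _ <;> rfl
  | cpmem x y z u w t => simp only [eval]; rcases eval v y with _ | _ | _ <;> rfl
  | cl2 x y z u w t =>
    simp only [eval]
    rcases eval v y with _ | _ | _ <;> rcases eval v u with _ | _ | _ <;> rfl
  | cpu => rfl

section
variable {A : Type} [DecidableEq A]

theorem eval_update (v : A → Option Bool) (a : A) (o : Option Bool) (P : ExprU A)
    (ha : a ∉ atoms P) : eval (Function.update v a o) P = eval v P := by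
  induction P with
  | T => rfl
  | F => rfl
  | U => rfl
  | atom b =>
    have : b ≠ a := by rintro rfl; simp [atoms] at ha
    simp [eval, this]
  | cond P Q R ih₁ ih₂ ih₃ =>
    simp only [atoms, Finset.mem_union, not_or] at ha
    simp only [eval, ih₁ ha.1.1, ih₂ ha.1.2, ih₃ ha.2]

theorem IsMBF.inv {P Q : ExprU A} {a : A} (h : IsMBF (ExprU.cond P (atom a) Q)) :
    IsMBF P ∧ IsMBF Q ∧ a ∉ atoms P ∧ a ∉ atoms Q := by
  cases h with
  | cond _ h₁ h₂ h₃ h₄ => exact ⟨h₁, h₂, h₃, h₄⟩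

/-- The branches of a mem-basic form are determined up to equivalence: since the root atom `a` does
not occur in them, they can be observed by setting `a` to true or to false. -/
theorem eval_branches {P Q P' Q' : ExprU A} {a : A}
    (hP : a ∉ atoms P) (hQ : a ∉ atoms Q) (hP' : a ∉ atoms P') (hQ' : a ∉ atoms Q')
    (h : ∀ v, eval v (cond P (atom a) Q) = eval v (cond P' (atom a) Q')) :
    (∀ v, eval v P = eval v P') ∧ (∀ v, eval v Q = eval v Q') := by
  constructor <;> intro v
  · have := h (Function.update v a (some true))
    simpa [eval, eval_update, hP, hQ, hP', hQ'] using this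
  · have := h (Function.update v a (some false))
    simpa [eval, eval_update, hP, hQ, hP', hQ'] using this

theorem undef_branches {P Q : ExprU A} {a : A} (hP : a ∉ atoms P) (hQ : a ∉ atoms Q)
    (h : Undef (cond P (atom a) Q)) : Undef P ∧ Undef Q := by
  have hU : a ∉ atoms (U : ExprU A) := by simp [atoms]
  refine eval_branches (P' := U) (Q' := U) hP hQ hU hU fun v => (h v).trans ?_
  simp only [eval]
  rcases v a with _ | _ | _ <;> rfl

/-! ### The shared alphabet -/

/-- Every path of the basic form from the root to a leaf `T` or `F` passes through `a`. -/
def Guards (a : A) : ExprU A → Prop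
  | cond P (atom b) Q => a = b ∨ (Guards a P ∧ Guards a Q)
  | U => True
  | _ => False

theorem mem_shaAux {P : ExprU A} (hP : IsMBF P) (b : A) (x : Finset A) (hx : atoms P ⊆ x) :
    b ∈ shaAux P x ↔ b ∈ x ∧ Guards b P := by
  induction hP generalizing x with
  | T => simp [shaAux, Guards]
  | F => simp [shaAux, Guards]
  | U => simp [shaAux, Guards]
  | @cond P Q a _ _ ha₁ ha₂ ih₁ ih₂ =>
    simp only [atoms, Finset.union_subset_iff, Finset.singleton_subset_iff] at hx
    simp only [shaAux, Guards, Finset.mem_insert, Finset.mem_inter]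
    rw [ih₁ _ (Finset.subset_erase.2 ⟨hx.1.1, ha₁⟩), ih₂ _ (Finset.subset_erase.2 ⟨hx.2, ha₂⟩),
      Finset.mem_erase]
    by_cases h : b = a
    · subst h; simp [hx.1.2]
    · simp only [h, false_or, ne_eq, not_false_eq_true, true_and]; tauto

theorem mem_sha {P : ExprU A} (hP : IsMBF P) (b : A) :
    b ∈ sha P ↔ b ∈ atoms P ∧ Guards b P :=
  mem_shaAux hP b _ subset_rfl

theorem guards_iff {P : ExprU A} (hP : IsMBF P) (b : A) :
    Guards b P ↔ ∀ v : A → Option Bool, v b = none → eval v P = none := by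
  induction hP with
  | T => simpa [Guards, eval] using ⟨fun _ => none, rfl⟩
  | F => simpa [Guards, eval] using ⟨fun _ => none, rfl⟩
  | U => simp [Guards, eval]
  | @cond P Q a _ _ ha₁ ha₂ ih₁ ih₂ =>
    simp only [Guards, ih₁, ih₂]
    constructor
    · rintro (rfl | ⟨h₁, h₂⟩) v hv
      · simp [eval, hv]
      · simp only [eval, h₁ v hv, h₂ v hv]
        rcases v a with _ | _ | _ <;> rfl
    · intro h
      by_cases hba : b = a
      · exact Or.inl hba
      · refine Or.inr ⟨fun v hv => ?_, fun v hv => ?_⟩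
        · have := h (Function.update v a (some true)) (by simp [hba, hv])
          simpa [eval, eval_update, ha₁, ha₂] using this
        · have := h (Function.update v a (some false)) (by simp [hba, hv])
          simpa [eval, eval_update, ha₁, ha₂] using this

/-- Unless `P` is equivalent to `U`, its shared alphabet depends only on its semantics: an atom
whose being undefined makes `P` undefined must then occur in `P`. -/
theorem mem_sha_iff_eval {P : ExprU A} (hP : IsMBF P) (hU : ¬ Undef P) (b : A) :
    b ∈ sha P ↔ ∀ v : A → Option Bool, v b = none → eval v P = none := by
  rw [mem_sha hP, guards_iff hP, and_iff_right_iff_imp]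
  intro h
  by_contra hb
  refine hU fun v => ?_
  rw [← eval_update v b none P hb]
  exact h _ (by simp)

theorem sha_congr {P Q : ExprU A} (hP : IsMBF P) (hQ : IsMBF Q) (hU : ¬ Undef P)
    (h : ∀ v, eval v P = eval v Q) : sha P = sha Q := by
  have hU' : ¬ Undef Q := fun hQ => hU fun v => (h v).trans (hQ v)
  ext b
  simp only [mem_sha_iff_eval hP hU, mem_sha_iff_eval hQ hU', h]

theorem IsMBF.const_of_sha {P : ExprU A} (hP : IsMBF P) (h : sha P = ∅) :
    P = ExprU.T ∨ P = ExprU.F ∨ P = ExprU.U := by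
  cases hP with
  | T => simp
  | F => simp
  | U => simp
  | cond a _ _ _ _ => simp [sha, shaAux] at h

/-! ### The forms `F_σ` -/

/-- The first half of the arguments of `F_{aρ}`, those below the true-branch of `a`. -/
def lft {a : A} {ρ : List A} (P : Fin (2 ^ (a :: ρ).length) → ExprU A) :
    Fin (2 ^ ρ.length) → ExprU A :=
  fun i => P ⟨i.1, by have := i.2; simp [Nat.pow_succ]; omega⟩

/-- The second half of the arguments of `F_{aρ}`, those below the false-branch of `a`. -/
def rgt {a : A} {ρ : List A} (P : Fin (2 ^ (a :: ρ).length) → ExprU A) :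
    Fin (2 ^ ρ.length) → ExprU A :=
  fun i => P ⟨2 ^ ρ.length + i.1, by have := i.2; simp [Nat.pow_succ]; omega⟩

omit [DecidableEq A] in
theorem Fseq_cons (a : A) (ρ : List A) (P : Fin (2 ^ (a :: ρ).length) → ExprU A) :
    Fseq (a :: ρ) P = cond (Fseq ρ (lft P)) (atom a) (Fseq ρ (rgt P)) := rfl

omit [DecidableEq A] in
theorem exists_lft_rgt {a : A} {ρ : List A} (i : Fin (2 ^ (a :: ρ).length)) :
    ∃ j : Fin (2 ^ ρ.length),
      (∀ P : Fin (2 ^ (a :: ρ).length) → ExprU A, P i = lft P j) ∨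
      (∀ P : Fin (2 ^ (a :: ρ).length) → ExprU A, P i = rgt P j) := by
  have hi : i.1 < 2 ^ ρ.length * 2 := by have := i.2; simpa [Nat.pow_succ] using this
  by_cases h : i.1 < 2 ^ ρ.length
  · exact ⟨⟨i.1, h⟩, Or.inl fun P => rfl⟩
  · refine ⟨⟨i.1 - 2 ^ ρ.length, by omega⟩, Or.inr fun P => ?_⟩
    exact congrArg P (Fin.ext (by simp only; omega))

omit [DecidableEq A] in
theorem exists_append (a : A) (ρ : List A) (P Q : Fin (2 ^ ρ.length) → ExprU A) :
    ∃ R : Fin (2 ^ (a :: ρ).length) → ExprU A, lft R = P ∧ rgt R = Q := by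
  refine ⟨fun i => if h : i.1 < 2 ^ ρ.length then P ⟨i.1, h⟩ else
    Q ⟨i.1 - 2 ^ ρ.length, by have := i.2; simp [Nat.pow_succ] at this; omega⟩, ?_, ?_⟩
  · funext i; simp [lft]
  · funext i; simp [rgt]

theorem Fseq_branch_equiv (σ : List A) (P Q : Fin (2 ^ σ.length) → ExprU A)
    (hP : IsMBF (Fseq σ P)) (hQ : IsMBF (Fseq σ Q))
    (h : ∀ v, eval v (Fseq σ P) = eval v (Fseq σ Q)) (i : Fin (2 ^ σ.length)) :
    ∀ v, eval v (P i) = eval v (Q i) := by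
  induction σ with
  | nil =>
    obtain rfl : i = ⟨0, by positivity⟩ := by
      ext; have := i.2; simp only [List.length_nil, pow_zero] at this; simp only; omega
    exact h
  | cons a ρ ih =>
    rw [Fseq_cons] at hP hQ
    simp only [Fseq_cons] at h
    obtain ⟨p₁, p₂, p₃, p₄⟩ := hP.inv
    obtain ⟨q₁, q₂, q₃, q₄⟩ := hQ.inv
    obtain ⟨h₁, h₂⟩ := eval_branches p₃ p₄ q₃ q₄ h
    obtain ⟨j, hj | hj⟩ := exists_lft_rgt i
    · rw [hj P, hj Q]; exact ih _ _ p₁ q₁ h₁ j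
    · rw [hj P, hj Q]; exact ih _ _ p₂ q₂ h₂ j

theorem Fseq_branch_undef (σ : List A) (P : Fin (2 ^ σ.length) → ExprU A)
    (hP : IsMBF (Fseq σ P)) (h : Undef (Fseq σ P)) (i : Fin (2 ^ σ.length)) : Undef (P i) := by
  induction σ with
  | nil =>
    obtain rfl : i = ⟨0, by positivity⟩ := by
      ext; have := i.2; simp only [List.length_nil, pow_zero] at this; simp only; omega
    exact h
  | cons a ρ ih =>
    rw [Fseq_cons] at hP h
    obtain ⟨p₁, p₂, p₃, p₄⟩ := hP.inv
    obtain ⟨h₁, h₂⟩ := undef_branches p₃ p₄ h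
    obtain ⟨j, hj | hj⟩ := exists_lft_rgt i
    · rw [hj P]; exact ih _ p₁ h₁ j
    · rw [hj P]; exact ih _ p₂ h₂ j

theorem atoms_Fseq (σ : List A) (P : Fin (2 ^ σ.length) → ExprU A) (b : A)
    (hb : b ∈ atoms (Fseq σ P)) : b ∈ σ ∨ ∃ i, b ∈ atoms (P i) := by
  induction σ with
  | nil => exact Or.inr ⟨_, hb⟩
  | cons a ρ ih =>
    simp only [Fseq_cons, atoms, Finset.mem_union, Finset.mem_singleton] at hb
    rcases hb with (hb | rfl) | hb
    · rcases ih _ hb with h | ⟨i, hi⟩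
      · exact Or.inl (List.mem_cons_of_mem _ h)
      · exact Or.inr ⟨_, hi⟩
    · simp
    · rcases ih _ hb with h | ⟨i, hi⟩
      · exact Or.inl (List.mem_cons_of_mem _ h)
      · exact Or.inr ⟨_, hi⟩

theorem IsMBF_Fseq (σ : List A) (hσ : σ.Nodup) (P : Fin (2 ^ σ.length) → ExprU A)
    (hP : ∀ i, IsMBF (P i)) (hd : ∀ i, ∀ a ∈ σ, a ∉ atoms (P i)) : IsMBF (Fseq σ P) := by
  induction σ with
  | nil => exact hP _
  | cons a ρ ih =>
    rw [List.nodup_cons] at hσ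
    rw [Fseq_cons]
    refine .cond a (ih hσ.2 _ (fun i => hP _) fun i b hb => hd _ b (List.mem_cons_of_mem _ hb))
      (ih hσ.2 _ (fun i => hP _) fun i b hb => hd _ b (List.mem_cons_of_mem _ hb)) ?_ ?_
    · intro h
      rcases atoms_Fseq _ _ _ h with h | ⟨i, hi⟩
      · exact hσ.1 h
      · exact hd _ a (by simp) hi
    · intro h
      rcases atoms_Fseq _ _ _ h with h | ⟨i, hi⟩
      · exact hσ.1 h
      · exact hd _ a (by simp) hi

omit [DecidableEq A] in
theorem der_Fseq (σ : List A) (P Q : Fin (2 ^ σ.length) → ExprU A)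
    (h : ∀ i, DerClU (P i) (Q i)) : DerClU (Fseq σ P) (Fseq σ Q) := by
  induction σ with
  | nil => exact h _
  | cons a ρ ih => exact .congr (ih _ _ fun i => h _) (.refl _) (ih _ _ fun i => h _)

/-! ### Derivations -/

omit [DecidableEq A] in
/-- `U ◁ y ▷ U = U`, obtained by moving the test `y` below the test `U` with (CL2). -/
theorem der_U (y : ExprU A) : DerClU (cond U y U) U :=
  .trans (.congr (.symm (.cpu T T)) (.refl y) (.symm (.cpu T T)))
    (.trans (.cl2 T U T y T T) (.cpu _ _))

omit [DecidableEq A] in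
theorem der_Fseq_U (σ : List A) : DerClU (Fseq σ fun _ => (U : ExprU A)) U := by
  induction σ with
  | nil => exact .refl _
  | cons a ρ ih => exact .trans (.congr ih (.refl _) ih) (der_U _)

theorem der_split {P : ExprU A} (hP : IsMBF P) (a : A) (h : Guards a P) :
    DerClU P (cond (lred a P) (atom a) (rred a P)) := by
  induction hP with
  | T => exact h.elim
  | F => exact h.elim
  | U => exact .symm (der_U _)
  | @cond P Q b _ _ _ _ ih₁ ih₂ =>
    by_cases hb : b = a
    · subst hb; simpa [lred, rred] using DerClU.refl _
    · simp only [Guards, Ne.symm hb, false_or] at h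
      simp only [lred, rred, hb, if_false]
      exact .trans (.congr (ih₁ h.1) (.refl _) (ih₂ h.2)) (.cl2 _ _ _ _ _ _)

theorem lred_props {P : ExprU A} (hP : IsMBF P) (a : A) :
    IsMBF (lred a P) ∧ atoms (lred a P) ⊆ (atoms P).erase a ∧
      ∀ b, b ≠ a → Guards b P → Guards b (lred a P) := by
  induction hP with
  | T => exact ⟨.T, by simp [lred, atoms], fun _ _ h => h⟩
  | F => exact ⟨.F, by simp [lred, atoms], fun _ _ h => h⟩
  | U => exact ⟨.U, by simp [lred, atoms], fun _ _ h => h⟩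
  | @cond P Q c hP hQ h₁ h₂ ih₁ ih₂ =>
    by_cases hc : c = a
    · subst hc
      simp only [lred, if_true]
      refine ⟨hP, Finset.subset_erase.2 ⟨?_, h₁⟩, ?_⟩
      · intro x hx; simp [atoms, hx]
      · rintro b hb (h | h)
        · exact (hb h).elim
        · exact h.1
    · simp only [lred, hc, if_false]
      obtain ⟨m₁, s₁, g₁⟩ := ih₁
      obtain ⟨m₂, s₂, g₂⟩ := ih₂
      refine ⟨.cond c m₁ m₂ (fun h => h₁ (Finset.mem_of_mem_erase (s₁ h)))
        (fun h => h₂ (Finset.mem_of_mem_erase (s₂ h))), ?_, ?_⟩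
      · intro x hx
        simp only [atoms, Finset.mem_union, Finset.mem_singleton] at hx
        simp only [atoms, Finset.mem_union, Finset.mem_singleton, Finset.mem_erase]
        rcases hx with (hx | rfl) | hx
        · have := Finset.mem_erase.1 (s₁ hx); tauto
        · tauto
        · have := Finset.mem_erase.1 (s₂ hx); tauto
      · rintro b hb (h | h)
        · exact Or.inl h
        · exact Or.inr ⟨g₁ b hb h.1, g₂ b hb h.2⟩

theorem rred_props {P : ExprU A} (hP : IsMBF P) (a : A) :
    IsMBF (rred a P) ∧ atoms (rred a P) ⊆ (atoms P).erase a ∧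
      ∀ b, b ≠ a → Guards b P → Guards b (rred a P) := by
  induction hP with
  | T => exact ⟨.T, by simp [rred, atoms], fun _ _ h => h⟩
  | F => exact ⟨.F, by simp [rred, atoms], fun _ _ h => h⟩
  | U => exact ⟨.U, by simp [rred, atoms], fun _ _ h => h⟩
  | @cond P Q c hP hQ h₁ h₂ ih₁ ih₂ =>
    by_cases hc : c = a
    · subst hc
      simp only [rred, if_true]
      refine ⟨hQ, Finset.subset_erase.2 ⟨?_, h₂⟩, ?_⟩
      · intro x hx; simp [atoms, hx]
      · rintro b hb (h | h)
        · exact (hb h).elim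
        · exact h.2
    · simp only [rred, hc, if_false]
      obtain ⟨m₁, s₁, g₁⟩ := ih₁
      obtain ⟨m₂, s₂, g₂⟩ := ih₂
      refine ⟨.cond c m₁ m₂ (fun h => h₁ (Finset.mem_of_mem_erase (s₁ h)))
        (fun h => h₂ (Finset.mem_of_mem_erase (s₂ h))), ?_, ?_⟩
      · intro x hx
        simp only [atoms, Finset.mem_union, Finset.mem_singleton] at hx
        simp only [atoms, Finset.mem_union, Finset.mem_singleton, Finset.mem_erase]
        rcases hx with (hx | rfl) | hx
        · have := Finset.mem_erase.1 (s₁ hx); tauto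
        · tauto
        · have := Finset.mem_erase.1 (s₂ hx); tauto
      · rintro b hb (h | h)
        · exact Or.inl h
        · exact Or.inr ⟨g₁ b hb h.1, g₂ b hb h.2⟩

/-- A mem-basic form can be decomposed along any list of atoms that guard it. -/
theorem exists_Fseq (σ : List A) (hσ : σ.Nodup) (P : ExprU A) (hP : IsMBF P)
    (hg : ∀ a ∈ σ, Guards a P) :
    ∃ Ps : Fin (2 ^ σ.length) → ExprU A, DerClU P (Fseq σ Ps) ∧
      ∀ i, IsMBF (Ps i) ∧ atoms (Ps i) ⊆ atoms P ∧ ∀ a ∈ σ, a ∉ atoms (Ps i) := by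
  induction σ generalizing P with
  | nil => exact ⟨fun _ => P, .refl _, fun _ => ⟨hP, subset_rfl, by simp⟩⟩
  | cons a ρ ih =>
    rw [List.nodup_cons] at hσ
    have hne : ∀ b ∈ ρ, b ≠ a := by rintro b hb rfl; exact hσ.1 hb
    obtain ⟨m₁, s₁, g₁⟩ := lred_props hP a
    obtain ⟨m₂, s₂, g₂⟩ := rred_props hP a
    obtain ⟨P₁, d₁, h₁⟩ := ih hσ.2 _ m₁ fun b hb => g₁ b (hne b hb) (hg b (by simp [hb]))
    obtain ⟨P₂, d₂, h₂⟩ := ih hσ.2 _ m₂ fun b hb => g₂ b (hne b hb) (hg b (by simp [hb]))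
    obtain ⟨R, rfl, rfl⟩ := exists_append a ρ P₁ P₂
    refine ⟨R, .trans (der_split hP a (hg a (by simp))) (.congr d₁ (.refl _) d₂), fun i => ?_⟩
    obtain ⟨j, hj | hj⟩ := exists_lft_rgt i
    · rw [hj R]
      obtain ⟨m, s, n⟩ := h₁ j
      have s' := s.trans s₁
      refine ⟨m, s'.trans (Finset.erase_subset _ _), fun b hb => ?_⟩
      rcases List.mem_cons.1 hb with rfl | hb
      · exact fun h => by simpa using s' h
      · exact n b hb
    · rw [hj R]
      obtain ⟨m, s, n⟩ := h₂ j
      have s' := s.trans s₂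
      refine ⟨m, s'.trans (Finset.erase_subset _ _), fun b hb => ?_⟩
      rcases List.mem_cons.1 hb with rfl | hb
      · exact fun h => by simpa using s' h
      · exact n b hb

end

/-! ### CLU-basic forms -/

section
variable {A : Type} [LinearOrder A]

theorem IsCUbf.isMBF {P : ExprU A} (h : IsCUbf P) : IsMBF P := by
  cases h with
  | T => exact .T
  | F => exact .F
  | U => exact .U
  | node hm => exact hm

theorem IsCUbf.eq_U {P : ExprU A} (h : IsCUbf P) (hU : Undef P) : P = ExprU.U := by
  induction h with
  | T => cases hU fun _ => none
  | F => cases hU fun _ => none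
  | U => rfl
  | node hm Ps hP hne _ ih =>
    obtain ⟨j, hj⟩ := hne
    exact (hj (ih j (Fseq_branch_undef _ Ps (hP ▸ hm) (hP ▸ hU) j))).elim

/-- The node case of the definition, with the shared alphabet replaced by an equal set `s` so that
the index type of the arguments need not mention the form itself. -/
theorem IsCUbf.exists_args {P : ExprU A} (h : IsCUbf P) (s : Finset A) (hs : sha P = s)
    (hne : s ≠ ∅) :
    ∃ Ps : Fin (2 ^ (s.sort (· ≤ ·)).length) → ExprU A,
      P = Fseq (s.sort (· ≤ ·)) Ps ∧ ∀ i, IsCUbf (Ps i) := by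
  subst hs
  cases h with
  | T => simp [sha, shaAux] at hne
  | F => simp [sha, shaAux] at hne
  | U => simp [sha, shaAux, atoms] at hne
  | node hm Ps hP _ hC => exact ⟨Ps, hP, hC⟩

theorem IsCUbf.of_args (s : Finset A) (Ps : Fin (2 ^ (s.sort (· ≤ ·)).length) → ExprU A)
    (hm : IsMBF (Fseq (s.sort (· ≤ ·)) Ps)) (hs : sha (Fseq (s.sort (· ≤ ·)) Ps) = s)
    (hne : ∃ j, Ps j ≠ ExprU.U) (hC : ∀ i, IsCUbf (Ps i)) : IsCUbf (Fseq (s.sort (· ≤ ·)) Ps) := by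
  generalize hP : Fseq (s.sort (· ≤ ·)) Ps = P at hm hs
  subst hs
  exact .node hm Ps hP.symm hne hC

theorem IsCUbf.unique {P Q : ExprU A} (hP : IsCUbf P) (hQ : IsCUbf Q)
    (h : ∀ v, eval v P = eval v Q) : P = Q := by
  have main : ∀ {P Q : ExprU A}, IsCUbf P → IsCUbf Q → (∀ v, eval v P = eval v Q) →
      sha P = ∅ ∨ Undef P → P = Q := by
    intro P Q hP hQ h hc
    by_cases hU : Undef P
    · rw [hP.eq_U hU, hQ.eq_U fun v => (h v).symm.trans (hU v)]
    · have hs := hc.resolve_right hU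
      have hs' : sha Q = ∅ := (sha_congr hP.isMBF hQ.isMBF hU h) ▸ hs
      have h0 := h fun _ => none
      rcases hP.isMBF.const_of_sha hs with rfl | rfl | rfl <;>
        rcases hQ.isMBF.const_of_sha hs' with rfl | rfl | rfl <;> simp_all [eval]
  induction hP generalizing Q with
  | T => exact main .T hQ h (Or.inl rfl)
  | F => exact main .F hQ h (Or.inl rfl)
  | U => exact main .U hQ h (Or.inl rfl)
  | @node P hm Ps hP hne hC ih =>
    by_cases hc : sha P = ∅ ∨ Undef P
    · exact main (.node hm Ps hP hne hC) hQ h hc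
    · rw [not_or] at hc
      obtain ⟨Qs, hQs, hQC⟩ := hQ.exists_args (sha P) (sha_congr hm hQ.isMBF hc.2 h).symm hc.1
      have : Ps = Qs := by
        funext i
        refine ih i (hQC i) (Fseq_branch_equiv _ Ps Qs (hP ▸ hm) (hQs ▸ hQ.isMBF) ?_ i)
        rw [← hP, ← hQs]; exact h
      rw [hP, hQs, this]

theorem exists_IsCUbf (P : ExprU A) (hP : IsMBF P) :
    ∃ Q : ExprU A, IsCUbf Q ∧ DerClU P Q ∧ atoms Q ⊆ atoms P := by
  induction hn : (atoms P).card using Nat.strong_induction_on generalizing P with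
  | _ n ih =>
  subst hn
  by_cases hs : sha P = ∅
  · refine ⟨P, ?_, .refl _, subset_rfl⟩
    rcases hP.const_of_sha hs with rfl | rfl | rfl
    exacts [.T, .F, .U]
  obtain ⟨c, hc⟩ := Finset.nonempty_iff_ne_empty.2 hs
  obtain ⟨Ps, hd, hPs⟩ := exists_Fseq ((sha P).sort (· ≤ ·)) (Finset.sort_nodup _ _) P hP
    fun a ha => ((mem_sha hP a).1 ((Finset.mem_sort _).1 ha)).2
  have hlt : ∀ i, (atoms (Ps i)).card < (atoms P).card := fun i =>
    Finset.card_lt_card ⟨(hPs i).2.1, fun hsub =>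
      (hPs i).2.2 c ((Finset.mem_sort _).2 hc) (hsub ((mem_sha hP c).1 hc).1)⟩
  choose Qs hQC hQd hQa using fun i => ih _ (hlt i) (Ps i) (hPs i).1 rfl
  have hPQ := hd.trans (der_Fseq _ Ps Qs hQd)
  by_cases hU : ∀ i, Qs i = U
  · obtain rfl : Qs = fun _ => U := funext hU
    exact ⟨U, .U, hPQ.trans (der_Fseq_U _), by simp [atoms]⟩
  · push Not at hU
    have hm : IsMBF (Fseq ((sha P).sort (· ≤ ·)) Qs) :=
      IsMBF_Fseq _ (Finset.sort_nodup _ _) _ (fun i => (hQC i).isMBF)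
        fun i a ha h => (hPs i).2.2 a ha (hQa i h)
    have hnU : ¬ Undef (Fseq ((sha P).sort (· ≤ ·)) Qs) := fun h => by
      obtain ⟨j, hj⟩ := hU
      exact hj ((hQC j).eq_U (Fseq_branch_undef _ Qs hm h j))
    refine ⟨_, .of_args _ Qs hm (sha_congr hm hP hnU fun v => (hPQ.sound v).symm) hU hQC, hPQ, ?_⟩
    intro b hb
    rcases atoms_Fseq _ _ _ hb with h | ⟨i, hi⟩
    · exact ((mem_sha hP b).1 ((Finset.mem_sort _).1 h)).1
    · exact (hPs i).2.1 (hQa i hi)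

end

end ExprU

open ExprU in
/-- For each three-valued mem-basic form P over A (with A strictly totally
ordered) there is a unique CLU-basic form Q such that CP_cl^U ⊢ P = Q. -/
theorem stmt_9 {A : Type} [LinearOrder A] (P : ExprU A) (hP : IsMBF P) :
    ∃! Q : ExprU A, IsCUbf Q ∧ DerClU P Q := by
  obtain ⟨Q, hQ, hd, -⟩ := exists_IsCUbf P hP
  refine ⟨Q, ⟨hQ, hd⟩, fun R hR => hR.1.unique hQ fun v => ?_⟩
  exact (hR.2.sound v).symm.trans (hd.sound v)
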